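/- Let β ∈ [1,2). For every ε > 0 there exists K ∈ ℕ such that for all k ≥ K, the set of k-feasible pairs (c,b) ∈ C^{≤k}(β) is nonempty and G(β) ≤ min over k-feasible (c,b) ∈ C^{≤k}(β) of sup_{α ∈ A(c,b)} P(c,α) ≤ G(β) + ε. (That is, this minimum converges to G(β) as k → ∞.) -/

import Mathlib

/-- The binary entropy function, `h(p) = p log₂(1/p) + (1-p) log₂(1/(1-p))`,
with the convention `h(0) = h(1) = 0` (automatic since `1/0 = 0` and `logb 2 0 = 0`). -/
noncomputable def binH (p : ℝ) : ℝ :=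
  p * Real.logb 2 (1 / p) + (1 - p) * Real.logb 2 (1 / (1 - p))

/-- `(c, b) ∈ C(β)`: `c : ℕ → [0,1]`, `∑ cᵢ/2ⁱ = 1/(β·2ᵇ)` and `∑ cᵢ ≤ 1`
(the latter expressed via partial sums, which is equivalent for nonnegative terms). -/
def memC (β : ℝ) (c : ℕ → ℝ) (b : ℕ) : Prop :=
  (∀ i, c i ∈ Set.Icc (0 : ℝ) 1) ∧
  (∑' i : ℕ, c i / 2 ^ i) = 1 / (β * 2 ^ b) ∧
  ∀ n : ℕ, (∑ i ∈ Finset.range n, c i) ≤ 1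

/-- `α ∈ A(c,b)`: `α : ℕ → [0,1]` with `∑ αᵢ cᵢ / 2ⁱ = 1/(β·2^{b+1})`. -/
def memA (β : ℝ) (b : ℕ) (c α : ℕ → ℝ) : Prop :=
  (∀ i, α i ∈ Set.Icc (0 : ℝ) 1) ∧
  (∑' i : ℕ, α i * c i / 2 ^ i) = 1 / (β * 2 ^ (b + 1))

/-- `P(c,α) = ∑ h(αᵢ)·cᵢ − h(∑ αᵢ·cᵢ)`. -/
noncomputable def Pfun (c α : ℕ → ℝ) : ℝ :=
  (∑' i : ℕ, binH (α i) * c i) - binH (∑' i : ℕ, α i * c i)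

/-- `sup_{α ∈ A(c,b)} P(c,α)`. -/
noncomputable def supP (β : ℝ) (b : ℕ) (c : ℕ → ℝ) : ℝ :=
  sSup {y | ∃ α, memA β b c α ∧ y = Pfun c α}

/-- `G(β) = inf_{(c,b) ∈ C(β)} sup_{α ∈ A(c,b)} P(c,α)`. -/
noncomputable def Gfun (β : ℝ) : ℝ :=
  sInf {y | ∃ c b, memC β c b ∧ y = supP β b c}

/-- `(c,b)` is `k`-feasible: `cᵢ · β · 2ᵏ ∈ ℕ` for every `i`. -/
def kFeasC (β : ℝ) (k : ℕ) (c : ℕ → ℝ) : Prop :=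
  ∀ i, ∃ m : ℕ, c i * (β * 2 ^ k) = m

/-- `α` is `k`-feasible (for `c`): `αᵢ · cᵢ · β · 2ᵏ ∈ ℕ` for every `i`, and if there is
a largest index `t` with `c t > 0` then `α t < 1`. -/
def kFeasA (β : ℝ) (k : ℕ) (c α : ℕ → ℝ) : Prop :=
  (∀ i, ∃ m : ℕ, α i * c i * (β * 2 ^ k) = m) ∧
  (∀ t, 0 < c t → (∀ i, t < i → c i = 0) → α t < 1)

theorem binH_eq_binEntropy_div (p : ℝ) : binH p = Real.binEntropy p / Real.log 2 := by
  simp only [binH, Real.binEntropy, Real.logb, one_div]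
  ring

theorem continuous_binH : Continuous binH := by
  rw [show binH = fun p => Real.binEntropy p / Real.log 2 from funext binH_eq_binEntropy_div]
  fun_prop

theorem binH_mem_Icc {p : ℝ} (hp : p ∈ Set.Icc (0 : ℝ) 1) : binH p ∈ Set.Icc (0 : ℝ) 1 := by
  have hlog : 0 < Real.log 2 := Real.log_pos one_lt_two
  rw [binH_eq_binEntropy_div]
  exact ⟨div_nonneg (Real.binEntropy_nonneg hp.1 hp.2) hlog.le,
    (div_le_one hlog).2 Real.binEntropy_le_log_two⟩

theorem exists_binH_modulus {ε : ℝ} (hε : 0 < ε) :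
    ∃ η > 0, ∀ p ∈ Set.Icc (0 : ℝ) 1, ∀ q ∈ Set.Icc (0 : ℝ) 1,
      |p - q| < η → |binH p - binH q| < ε := by
  have h := isCompact_Icc.uniformContinuousOn_of_continuous
    (continuous_binH.continuousOn (s := Set.Icc (0 : ℝ) 1))
  simpa only [Real.dist_eq] using Metric.uniformContinuousOn_iff.1 h ε hε

section memC

variable {β : ℝ} {b : ℕ} {c : ℕ → ℝ}

theorem memC.summable (hc : memC β c b) : Summable c :=
  summable_of_sum_range_le (fun i => (hc.1 i).1) hc.2.2

theorem memC.tsum_le_one (hc : memC β c b) : ∑' i, c i ≤ 1 :=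
  hc.summable.tsum_le_of_sum_range_le hc.2.2

theorem memC.summable_mul (hc : memC β c b) {a : ℕ → ℝ} (ha : ∀ i, a i ∈ Set.Icc (0 : ℝ) 1) :
    Summable fun i => a i * c i :=
  hc.summable.of_nonneg_of_le (fun i => mul_nonneg (ha i).1 (hc.1 i).1)
    fun i => mul_le_of_le_one_left (hc.1 i).1 (ha i).2

theorem memC.tsum_mul_mem_Icc (hc : memC β c b) {a : ℕ → ℝ}
    (ha : ∀ i, a i ∈ Set.Icc (0 : ℝ) 1) : ∑' i, a i * c i ∈ Set.Icc (0 : ℝ) 1 :=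
  ⟨tsum_nonneg fun i => mul_nonneg (ha i).1 (hc.1 i).1,
    ((hc.summable_mul ha).tsum_le_tsum (fun i => mul_le_of_le_one_left (hc.1 i).1 (ha i).2)
      hc.summable).trans hc.tsum_le_one⟩

theorem div_two_pow_mem_Icc {x : ℝ} (hx : x ∈ Set.Icc (0 : ℝ) 1) (i : ℕ) :
    x / 2 ^ i ∈ Set.Icc (0 : ℝ) 1 :=
  ⟨div_nonneg hx.1 (by positivity), (div_le_one (by positivity)).2
    (hx.2.trans (one_le_pow₀ one_le_two))⟩

theorem memC.summable_mul_div (hc : memC β c b) {a : ℕ → ℝ}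
    (ha : ∀ i, a i ∈ Set.Icc (0 : ℝ) 1) : Summable fun i => a i * c i / 2 ^ i :=
  (hc.summable_mul fun i => div_two_pow_mem_Icc (ha i) i).congr fun i => by ring

theorem memC.summable_div (hc : memC β c b) : Summable fun i => c i / 2 ^ i := by
  simpa using hc.summable_mul_div (a := fun _ => 1) fun _ => ⟨zero_le_one, le_rfl⟩

theorem memC.abs_tsum_mul_sub_le {c' : ℕ → ℝ} (hc : memC β c b) (hc' : memC β c' b)
    {a a' : ℕ → ℝ} (ha : ∀ i, a i ∈ Set.Icc (0 : ℝ) 1) (ha' : ∀ i, a' i ∈ Set.Icc (0 : ℝ) 1)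
    {e : ℝ} (he : 0 ≤ e) (h : ∀ i, |a i - a' i| ≤ e) :
    |∑' i, a i * c i - ∑' i, a' i * c' i| ≤ e + ∑' i, |c i - c' i| := by
  have hs : Summable fun i => |c i - c' i| := (hc.summable.sub hc'.summable).abs
  have hb : ∀ i, |a i * c i - a' i * c' i| ≤ e * c i + |c i - c' i| := fun i =>
    calc |a i * c i - a' i * c' i| = |(a i - a' i) * c i + a' i * (c i - c' i)| := by ring_nf
      _ ≤ |(a i - a' i) * c i| + |a' i * (c i - c' i)| := abs_add_le _ _
      _ = |a i - a' i| * c i + a' i * |c i - c' i| := by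
        rw [abs_mul, abs_mul, abs_of_nonneg (hc.1 i).1, abs_of_nonneg (ha' i).1]
      _ ≤ e * c i + |c i - c' i| := add_le_add (mul_le_mul_of_nonneg_right (h i) (hc.1 i).1)
        (mul_le_of_le_one_left (abs_nonneg _) (ha' i).2)
  have hsum : Summable fun i => e * c i + |c i - c' i| := (hc.summable.mul_left e).add hs
  rw [← (hc.summable_mul ha).tsum_sub (hc'.summable_mul ha')]
  calc |∑' i, (a i * c i - a' i * c' i)| ≤ ∑' i, (e * c i + |c i - c' i|) :=
        Real.norm_eq_abs _ ▸ tsum_of_norm_bounded hsum.hasSum hb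
    _ = e * ∑' i, c i + ∑' i, |c i - c' i| := by
        rw [(hc.summable.mul_left e).tsum_add hs, tsum_mul_left]
    _ ≤ e + ∑' i, |c i - c' i| := by
        gcongr
        exact mul_le_of_le_one_right he hc.tsum_le_one

theorem memC.Pfun_mem_Icc (hc : memC β c b) {α : ℕ → ℝ} (hα : memA β b c α) :
    Pfun c α ∈ Set.Icc (-1 : ℝ) 1 := by
  have h₁ := hc.tsum_mul_mem_Icc fun i => binH_mem_Icc (hα.1 i)
  have h₂ := binH_mem_Icc (hc.tsum_mul_mem_Icc hα.1)
  simp only [Set.mem_Icc, Pfun] at *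
  constructor <;> linarith

theorem memC.bddAbove_Pfun (hc : memC β c b) :
    BddAbove {y | ∃ α, memA β b c α ∧ y = Pfun c α} := by
  refine ⟨1, ?_⟩
  rintro _ ⟨α, hα, rfl⟩
  exact (hc.Pfun_mem_Icc hα).2

theorem memC.half_memA (hc : memC β c b) : memA β b c fun _ => 1 / 2 := by
  refine ⟨fun _ => by norm_num, ?_⟩
  simp_rw [mul_div_assoc]
  rw [tsum_mul_left, hc.2.1, pow_succ]
  ring

theorem memC.neg_one_le_supP (hc : memC β c b) : -1 ≤ supP β b c :=
  (hc.Pfun_mem_Icc hc.half_memA).1.trans (le_csSup hc.bddAbove_Pfun ⟨_, hc.half_memA, rfl⟩)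

/-- A weight sequence whose weighted sum is close to the target of `memA` is uniformly close to
a member of `memA`. -/
theorem memC.exists_memA_abs_sub_le (hβ : 0 < β) (hc : memC β c b) {a : ℕ → ℝ}
    (ha : ∀ i, a i ∈ Set.Icc (0 : ℝ) 1) :
    ∃ α, memA β b c α ∧ ∀ i, |α i - a i| ≤
      |∑' i, a i * c i / 2 ^ i - 1 / (β * 2 ^ (b + 1))| / (1 / (β * 2 ^ (b + 1))) := by
  set T : ℝ := 1 / (β * 2 ^ (b + 1)) with hT
  have hTpos : 0 < T := by positivity
  have hM : ∑' i, c i / 2 ^ i = 2 * T := by rw [hc.2.1, hT, pow_succ]; field_simp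
  set S := ∑' i, a i * c i / 2 ^ i with hS
  rcases le_total T S with h | h
  · have hSpos : 0 < S := hTpos.trans_le h
    have hr : T / S ≤ 1 := (div_le_one hSpos).2 h
    have hr0 : 0 ≤ T / S := by positivity
    refine ⟨fun i => T / S * a i, ⟨fun i => ⟨mul_nonneg hr0 (ha i).1,
      mul_le_one₀ hr (ha i).1 (ha i).2⟩, ?_⟩, fun i => ?_⟩
    · simp_rw [mul_assoc, mul_div_assoc]
      rw [tsum_mul_left]
      simp_rw [← mul_div_assoc]
      rw [← hS, div_mul_cancel₀ _ hSpos.ne']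
    · have : T / S * a i - a i = -(a i * (1 - T / S)) := by ring
      rw [this, abs_neg, abs_of_nonneg (mul_nonneg (ha i).1 (by linarith)),
        abs_of_nonneg (by linarith)]
      calc a i * (1 - T / S) ≤ 1 - T / S := mul_le_of_le_one_left (by linarith) (ha i).2
        _ = (S - T) / S := by field_simp
        _ ≤ (S - T) / T := div_le_div_of_nonneg_left (by linarith) hTpos h
  · have hR : T ≤ 2 * T - S := by linarith
    have hRpos : 0 < 2 * T - S := by linarith
    have hr : T / (2 * T - S) ≤ 1 := (div_le_one hRpos).2 hR
    have hr0 : 0 ≤ T / (2 * T - S) := by positivity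
    have ha' : ∀ i, 1 - a i ∈ Set.Icc (0 : ℝ) 1 := fun i =>
      ⟨by linarith [(ha i).2], by linarith [(ha i).1]⟩
    have hsum : ∑' i, (1 - a i) * c i / 2 ^ i = 2 * T - S := by
      rw [← hM, hS, ← hc.summable_div.tsum_sub (hc.summable_mul_div ha)]
      exact tsum_congr fun i => by ring
    refine ⟨fun i => 1 - T / (2 * T - S) * (1 - a i), ⟨fun i => ?_, ?_⟩, fun i => ?_⟩
    · have h₁ := mul_nonneg hr0 (ha' i).1
      have h₂ := mul_le_one₀ hr (ha' i).1 (ha' i).2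
      constructor <;> linarith
    · calc ∑' i, (1 - T / (2 * T - S) * (1 - a i)) * c i / 2 ^ i
          = ∑' i, (c i / 2 ^ i - T / (2 * T - S) * ((1 - a i) * c i / 2 ^ i)) :=
            tsum_congr fun i => by ring
        _ = 2 * T - T / (2 * T - S) * (2 * T - S) := by
            rw [hc.summable_div.tsum_sub ((hc.summable_mul_div ha').mul_left _), tsum_mul_left,
              hsum, hM]
        _ = T := by field_simp; ring
    · have : 1 - T / (2 * T - S) * (1 - a i) - a i = (1 - a i) * (1 - T / (2 * T - S)) := by ring
      rw [this, abs_of_nonneg (mul_nonneg (ha' i).1 (by linarith)),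
        abs_of_nonpos (by linarith)]
      calc (1 - a i) * (1 - T / (2 * T - S)) ≤ 1 - T / (2 * T - S) :=
            mul_le_of_le_one_left (by linarith) (ha' i).2
        _ = -(S - T) / (2 * T - S) := by rw [one_sub_div hRpos.ne']; ring
        _ ≤ -(S - T) / T := div_le_div_of_nonneg_left (by linarith) hTpos hR

/-- `supP` is upper semicontinuous in the `ℓ¹` distance on `{c | memC β c b}`. -/
theorem memC.exists_supP_le_add (hβ : 0 < β) (hc : memC β c b) {ε : ℝ} (hε : 0 < ε) :
    ∃ δ > 0, ∀ c', memC β c' b → ∑' i, |c i - c' i| ≤ δ → supP β b c' ≤ supP β b c + ε := by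
  obtain ⟨η, hη, hmod⟩ := exists_binH_modulus (show 0 < ε / 4 by positivity)
  set T : ℝ := 1 / (β * 2 ^ (b + 1)) with hT
  have hTpos : 0 < T := by positivity
  refine ⟨min (ε / 4) (η / (2 * (1 / T + 1))), by positivity, fun c' hc' hd => ?_⟩
  set d := ∑' i, |c i - c' i|
  have hd0 : 0 ≤ d := tsum_nonneg fun i => abs_nonneg _
  have hdε : d ≤ ε / 4 := hd.trans (min_le_left _ _)
  have hdη : d / T + d < η := by
    have h := (le_div_iff₀ (by positivity)).1 (hd.trans (min_le_right _ _))
    have : d * (2 * (1 / T + 1)) = 2 * (d / T + d) := by ring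
    linarith
  have hdT : d / T < η := by linarith
  refine csSup_le ⟨_, _, hc'.half_memA, rfl⟩ ?_
  rintro _ ⟨a, ha, rfl⟩
  have hST : |∑' i, a i * c i / 2 ^ i - T| ≤ d := by
    have h := hc.abs_tsum_mul_sub_le hc' (a := fun i => a i / 2 ^ i) (a' := fun i => a i / 2 ^ i)
      (fun i => div_two_pow_mem_Icc (ha.1 i) i) (fun i => div_two_pow_mem_Icc (ha.1 i) i)
      le_rfl fun i => by simp
    simp_rw [div_mul_eq_mul_div] at h
    rw [ha.2, zero_add] at h
    exact h
  obtain ⟨α, hα, hαa⟩ := hc.exists_memA_abs_sub_le hβ ha.1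
  have hαa' : ∀ i, |α i - a i| ≤ d / T := fun i =>
    (hαa i).trans (div_le_div_of_nonneg_right hST hTpos.le)
  have h₁ := hc.abs_tsum_mul_sub_le hc' (fun i => binH_mem_Icc (hα.1 i))
    (fun i => binH_mem_Icc (ha.1 i)) (show 0 ≤ ε / 4 by positivity)
    fun i => (hmod _ (hα.1 i) _ (ha.1 i) ((hαa' i).trans_lt hdT)).le
  have h₂ := hmod _ (hc.tsum_mul_mem_Icc hα.1) _ (hc'.tsum_mul_mem_Icc ha.1)
    ((hc.abs_tsum_mul_sub_le hc' hα.1 ha.1 (by positivity) hαa').trans_lt hdη)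
  have h₃ : Pfun c α ≤ supP β b c := le_csSup hc.bddAbove_Pfun ⟨α, hα, rfl⟩
  have h₁' := abs_le.1 h₁
  have h₂' := abs_lt.1 h₂
  simp only [Pfun] at h₃ ⊢
  linarith

end memC

/-- The truncation of `c` to indices below `N`, rounded down to multiples of `1/(β·2ᴺ)`. -/
noncomputable def floorTrunc (β : ℝ) (c : ℕ → ℝ) (N i : ℕ) : ℝ :=
  if i < N then ⌊c i * (β * 2 ^ N)⌋₊ / (β * 2 ^ N) else 0

section floorTrunc

variable {β : ℝ} {c : ℕ → ℝ}

theorem floorTrunc_nonneg (hβ : 0 < β) (N i : ℕ) : 0 ≤ floorTrunc β c N i := by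
  unfold floorTrunc
  split_ifs <;> positivity

theorem floorTrunc_le (hβ : 0 < β) (hc : ∀ i, 0 ≤ c i) (N i : ℕ) : floorTrunc β c N i ≤ c i := by
  unfold floorTrunc
  split_ifs
  · exact (div_le_iff₀ (by positivity)).2 (Nat.floor_le (mul_nonneg (hc i) (by positivity)))
  · exact hc i

theorem tendsto_floorTrunc (hβ : 0 < β) (hc : ∀ i, 0 ≤ c i) (i : ℕ) :
    Filter.Tendsto (fun N => floorTrunc β c N i) Filter.atTop (nhds (c i)) := by
  have hlim : Filter.Tendsto (fun N : ℕ => c i - β⁻¹ * (1 / 2) ^ N) Filter.atTop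
      (nhds (c i)) := by
    simpa using ((tendsto_pow_atTop_nhds_zero_of_lt_one (r := (1 / 2 : ℝ)) (by norm_num)
      (by norm_num)).const_mul β⁻¹).const_sub (c i)
  refine tendsto_of_tendsto_of_tendsto_of_le_of_le' hlim tendsto_const_nhds ?_
    (Filter.Eventually.of_forall fun N => floorTrunc_le hβ hc N i)
  filter_upwards [Filter.eventually_gt_atTop i] with N hN
  have hpos : 0 < β * 2 ^ N := by positivity
  rw [floorTrunc, if_pos hN, le_div_iff₀ hpos]
  have h := Nat.lt_floor_add_one (c i * (β * 2 ^ N))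
  have h' : (c i - β⁻¹ * (1 / 2) ^ N) * (β * 2 ^ N) = c i * (β * 2 ^ N) - 1 := by
    rw [one_div, inv_pow]
    field_simp
  linarith

theorem tendsto_tsum_sub_floorTrunc (hβ : 0 < β) (hc : ∀ i, 0 ≤ c i) (hs : Summable c) :
    Filter.Tendsto (fun N => ∑' i, (c i - floorTrunc β c N i)) Filter.atTop (nhds 0) := by
  have h := tendsto_tsum_of_dominated_convergence (𝓕 := Filter.atTop) (g := fun _ => (0 : ℝ))
    (f := fun N i => c i - floorTrunc β c N i) hs
    (fun i => by simpa using (tendsto_floorTrunc hβ hc i).const_sub (c i))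
    (Filter.Eventually.of_forall fun N i => by
      rw [Real.norm_of_nonneg (sub_nonneg.2 (floorTrunc_le hβ hc N i))]
      linarith [floorTrunc_nonneg (c := c) hβ N i])
  simpa using h

end floorTrunc

/-- Members of `memC` are `ℓ¹`-limits of `k`-feasible ones: round down and put the missing
weighted mass on index `0`. -/
theorem memC.exists_kFeasC_tsum_abs_sub_le {β : ℝ} {b : ℕ} {c : ℕ → ℝ} (hβ : 0 < β)
    (hc : memC β c b) {δ : ℝ} (hδ : 0 < δ) :
    ∃ k c', memC β c' b ∧ (∀ i, k < i → c' i = 0) ∧ kFeasC β k c' ∧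
      ∑' i, |c i - c' i| ≤ δ := by
  have hc0 : ∀ i, 0 ≤ c i := fun i => (hc.1 i).1
  obtain ⟨N, hN⟩ := ((tendsto_tsum_sub_floorTrunc hβ hc0 hc.summable).eventually
    (gt_mem_nhds (half_pos hδ))).exists
  set f := floorTrunc β c N with hf
  have hf0 : ∀ i, 0 ≤ f i := floorTrunc_nonneg hβ N
  have hfc : ∀ i, f i ≤ c i := floorTrunc_le hβ hc0 N
  have hfz : ∀ i, N ≤ i → f i = 0 := fun i hi => if_neg hi.not_gt
  have hfs : Summable f := hc.summable.of_nonneg_of_le hf0 hfc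
  have hfw : Summable fun i => f i / 2 ^ i := hc.summable_div.of_nonneg_of_le
    (fun i => div_nonneg (hf0 i) (by positivity))
    fun i => div_le_div_of_nonneg_right (hfc i) (by positivity)
  set D := ∑' i, (c i - f i) / 2 ^ i
  have hDs : Summable fun i => (c i - f i) / 2 ^ i :=
    (hc.summable_div.sub hfw).congr fun i => by ring
  have hD0 : 0 ≤ D := tsum_nonneg fun i => div_nonneg (sub_nonneg.2 (hfc i)) (by positivity)
  have hDle : D ≤ ∑' i, (c i - f i) := hDs.tsum_le_tsum
    (fun i => div_le_self (sub_nonneg.2 (hfc i)) (one_le_pow₀ one_le_two)) (hc.summable.sub hfs)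
  have hDeq : D = 1 / (β * 2 ^ b) - ∑' i, f i / 2 ^ i := by
    rw [← hc.2.1, ← hc.summable_div.tsum_sub hfw]
    exact tsum_congr fun i => by ring
  set g : ℕ → ℝ := Pi.single 0 D with hg
  have hg0 : ∀ i, 0 ≤ g i := fun i => by
    rcases eq_or_ne i 0 with rfl | hi
    · simpa [hg] using hD0
    · simp [hg, hi]
  have hgsum : HasSum g D := by simpa [hg] using hasSum_pi_single 0 D
  have hgw : HasSum (fun i => g i / 2 ^ i) D := by
    convert hgsum using 1
    ext i
    rcases eq_or_ne i 0 with rfl | hi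
    · simp
    · simp [hg, hi]
  have hsum : ∑' i, (f i + g i) ≤ 1 := by
    rw [hfs.tsum_add hgsum.summable, hgsum.tsum_eq]
    rw [hc.summable.tsum_sub hfs] at hDle
    linarith [hc.tsum_le_one]
  have hs : Summable fun i => f i + g i := hfs.add hgsum.summable
  have h0 : ∀ i, 0 ≤ f i + g i := fun i => add_nonneg (hf0 i) (hg0 i)
  have hmul : ∀ i, ∃ m : ℕ, f i * (β * 2 ^ N) = m := fun i => by
    by_cases hi : i < N
    · refine ⟨⌊c i * (β * 2 ^ N)⌋₊, ?_⟩
      rw [hf, floorTrunc, if_pos hi]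
      field_simp
    · exact ⟨0, by simp [hfz i (not_lt.1 hi)]⟩
  choose m hm using hmul
  have hfi : ∀ i, f i * (β * 2 ^ (2 * N + b)) = (m i * 2 ^ (N + b) : ℕ) := fun i => by
    push_cast
    rw [← hm i]
    ring
  have hDm : D * (β * 2 ^ (2 * N + b)) =
      ((2 ^ (2 * N) : ℤ) - ∑ i ∈ Finset.range N, (m i * 2 ^ (N - i + b) : ℤ) : ℤ) := by
    rw [hDeq, tsum_eq_sum (s := Finset.range N) fun i hi => by
      rw [hfz i (by simpa using hi), zero_div], sub_mul, Finset.sum_mul]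
    push_cast
    congr 1
    · rw [pow_add]
      field_simp
    · refine Finset.sum_congr rfl fun i hi => ?_
      have hiN : N = (N - i) + i := by have := Finset.mem_range.1 hi; omega
      rw [← hm i, show 2 * N + b = N + ((N - i) + i) + b by omega]
      simp only [pow_add]
      field_simp
  obtain ⟨n, hn⟩ : ∃ n : ℕ, D * (β * 2 ^ (2 * N + b)) = n := by
    have hnn : (0 : ℝ) ≤ D * (β * 2 ^ (2 * N + b)) := by positivity
    rw [hDm] at hnn ⊢
    obtain ⟨n, hn⟩ := Int.eq_ofNat_of_zero_le (Int.cast_nonneg_iff.1 hnn)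
    exact ⟨n, by rw [hn]; simp⟩
  refine ⟨2 * N + b, fun i => f i + g i, ⟨fun i => ⟨h0 i, ?_⟩, ?_, fun n => ?_⟩,
    fun i hi => ?_, fun i => ?_, ?_⟩
  · exact (hs.le_tsum i fun j _ => h0 j).trans hsum
  · simp_rw [add_div]
    rw [hfw.tsum_add hgw.summable, hgw.tsum_eq, hDeq]
    ring
  · exact (hs.sum_le_tsum _ fun j _ => h0 j).trans hsum
  · simp [hfz i (by omega), hg, show i ≠ 0 by omega]
  · rcases eq_or_ne i 0 with rfl | hi
    · refine ⟨m 0 * 2 ^ (N + b) + n, ?_⟩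
      rw [add_mul, hfi, show g 0 = D by simp [hg], hn]
      push_cast
      ring
    · exact ⟨m i * 2 ^ (N + b), by rw [← hfi]; simp [hg, hi]⟩
  · calc ∑' i, |c i - (f i + g i)| ≤ ∑' i, ((c i - f i) + g i) := by
          refine (hc.summable.sub hs).abs.tsum_le_tsum (fun i => ?_)
            ((hc.summable.sub hfs).add hgsum.summable)
          rw [abs_le]
          constructor <;> linarith [hfc i, hg0 i]
      _ = ∑' i, (c i - f i) + D := by
          rw [(hc.summable.sub hfs).tsum_add hgsum.summable, hgsum.tsum_eq]
      _ ≤ δ := by linarith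

theorem memC_single_zero {β : ℝ} (hβ : 1 ≤ β) : memC β (Pi.single 0 (1 / β)) 0 := by
  have hpos : 0 < β := by linarith
  have hle : 1 / β ≤ 1 := (div_le_one hpos).2 hβ
  have h0 : ∀ i, 0 ≤ (Pi.single 0 (1 / β) : ℕ → ℝ) i := fun i => by
    rcases eq_or_ne i 0 with rfl | hi
    · simpa using hpos.le
    · simp [hi]
  have hsum : HasSum (Pi.single 0 (1 / β) : ℕ → ℝ) (1 / β) := hasSum_pi_single 0 _
  refine ⟨fun i => ⟨h0 i, (le_hasSum hsum i fun j _ => h0 j).trans hle⟩, ?_, fun n =>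
    (sum_le_hasSum _ (fun j _ => h0 j) hsum).trans hle⟩
  rw [tsum_eq_single 0 fun i hi => by simp [hi]]
  simp

theorem kFeasC.mono {β : ℝ} {k l : ℕ} {c : ℕ → ℝ} (h : kFeasC β k c) (hkl : k ≤ l) :
    kFeasC β l c := fun i => by
  obtain ⟨m, hm⟩ := h i
  refine ⟨m * 2 ^ (l - k), ?_⟩
  push_cast
  rw [← hm, ← Nat.add_sub_cancel' hkl, pow_add, Nat.add_sub_cancel_left]
  ring

/-- The minimum of `sup_{α ∈ A(c,b)} P(c,α)` over `k`-feasible `(c,b) ∈ C^{≤k}(β)`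
converges to `G(β)` as `k → ∞`. -/
theorem lim_min_kfeasible (β : ℝ) (hβ : β ∈ Set.Ico (1 : ℝ) 2) :
    ∀ ε > (0 : ℝ), ∃ K : ℕ, ∀ k : ℕ, K ≤ k →
      (∃ c : ℕ → ℝ, ∃ b : ℕ, memC β c b ∧ (∀ i, k < i → c i = 0) ∧ kFeasC β k c) ∧
      Gfun β ≤ sInf {y | ∃ c : ℕ → ℝ, ∃ b : ℕ, memC β c b ∧ (∀ i, k < i → c i = 0) ∧ kFeasC β k c ∧ y = supP β b c} ∧
      sInf {y | ∃ c : ℕ → ℝ, ∃ b : ℕ, memC β c b ∧ (∀ i, k < i → c i = 0) ∧ kFeasC β k c ∧ y = supP β b c} ≤ Gfun β + ε := by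
  intro ε hε
  have hβ0 : 0 < β := one_pos.trans_le hβ.1
  have hbdd : BddBelow {y | ∃ c b, memC β c b ∧ y = supP β b c} := by
    refine ⟨-1, ?_⟩
    rintro _ ⟨c, b, hc, rfl⟩
    exact hc.neg_one_le_supP
  obtain ⟨_, ⟨c, b, hc, rfl⟩, hlt⟩ := exists_lt_of_csInf_lt
    (s := {y | ∃ c b, memC β c b ∧ y = supP β b c}) ⟨_, _, _, memC_single_zero hβ.1, rfl⟩
    (lt_add_of_pos_right (Gfun β) (half_pos hε))
  obtain ⟨δ, hδ, hsup⟩ := hc.exists_supP_le_add hβ0 (half_pos hε)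
  obtain ⟨K, c', hc', hz, hfeas, hd⟩ := hc.exists_kFeasC_tsum_abs_sub_le hβ0 hδ
  refine ⟨K, fun k hk => ?_⟩
  have hne : ∃ c : ℕ → ℝ, ∃ b : ℕ, memC β c b ∧ (∀ i, k < i → c i = 0) ∧ kFeasC β k c :=
    ⟨c', b, hc', fun i hi => hz i (hk.trans_lt hi), hfeas.mono hk⟩
  have hsub : {y | ∃ c : ℕ → ℝ, ∃ b : ℕ, memC β c b ∧ (∀ i, k < i → c i = 0) ∧ kFeasC β k c ∧
      y = supP β b c} ⊆ {y | ∃ c b, memC β c b ∧ y = supP β b c} := by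
    rintro _ ⟨c, b, hc, -, -, rfl⟩
    exact ⟨c, b, hc, rfl⟩
  refine ⟨hne, csInf_le_csInf hbdd ?_ hsub, ?_⟩
  · obtain ⟨c, b, h₁, h₂, h₃⟩ := hne
    exact ⟨_, c, b, h₁, h₂, h₃, rfl⟩
  · refine (csInf_le (hbdd.mono hsub)
      ⟨c', b, hc', fun i hi => hz i (hk.trans_lt hi), hfeas.mono hk, rfl⟩).trans ?_
    linarith [hsup c' hc' hd]
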